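/- Let b : [0,∞) → ℝ be real-analytic (i.e. the restriction of a function analytic on an open set containing [0,∞)) with b(0) > 0. Let μ be a σ-finite nonnegative Borel measure on (0,∞) with μ((0, 2b(0))) = 0 and ∫ exp(−θ²/(2t*)) μ(dθ) < ∞ for some t* ∈ (0,∞). Suppose there is a sequence (t_n) of pairwise distinct points of (0,∞) having an accumulation point t̃ ∈ (0, t*) and satisfying r_μ(t_n, b(t_n)) = 1 for every n. Then r_μ(t, b(t)) = 1 for every t ∈ (0, t*). -/

import Mathlib

open MeasureTheory Set Filter
open scoped ENNReal NNReal Topology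

noncomputable def rTheta (θ t x : ℝ) : ℝ := Real.exp (-θ ^ 2 / (2 * t) + θ * x / t)

noncomputable def rMu (μ : Measure ℝ) (t x : ℝ) : ℝ≥0∞ :=
  ∫⁻ θ, ENNReal.ofReal (rTheta θ t x) ∂μ

/-! The curve `t ↦ r_μ(t, b(t))` is real-analytic on `(0, t*)`, so the identity theorem applies. For
analyticity, extend `b` holomorphically near a given `t₀ ∈ (0, t*)` and note that the resulting
integrand `exp(-θ² / (2z) + θ b(z) / z)` is holomorphic in `z`. Because `Re (1 / (2z)) > 1 / (2t*)`
near `t₀`, the Gaussian weight `exp(-θ² / (2t*))` absorbs the linear term in `θ` and dominates the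
integrand uniformly in `z`. -/

theorem accPt_principal_range_of_mapClusterPt_cofinite {ι X : Type*} [TopologicalSpace X]
    {u : ι → X} {x : X} (hu : Function.Injective u) (hx : MapClusterPt x cofinite u) :
    AccPt x (𝓟 (range u)) := by
  have hne : map u cofinite ≤ 𝓟 {x}ᶜ :=
    hu.tendsto_cofinite.mono_right (le_principal_iff.2 (finite_singleton x).compl_mem_cofinite)
  have hrange : map u cofinite ≤ 𝓟 (range u) := le_principal_iff.2 range_mem_map
  exact accPt_iff_clusterPt.2 (ClusterPt.mono hx (le_inf hne hrange))

theorem exists_analyticAt_complex_eventually_eq {E : Type*} [NormedAddCommGroup E]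
    [NormedSpace ℂ E] [CompleteSpace E] {f : ℝ → E} {t₀ : ℝ} (hf : AnalyticAt ℝ f t₀) :
    ∃ F : ℂ → E, AnalyticAt ℂ F t₀ ∧ ∀ᶠ t : ℝ in 𝓝 t₀, F t = f t := by
  obtain ⟨p, hp⟩ := hf
  let q : FormalMultilinearSeries ℂ ℂ E :=
    fun n => ContinuousMultilinearMap.mkPiRing ℂ (Fin n) (p.coeff n)
  have hcoeff : ∀ n, q.coeff n = p.coeff n := fun n =>
    (ContinuousMultilinearMap.mkPiRing_apply _ _).trans (by simp)
  have hradius : q.radius = p.radius := by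
    simp [q, FormalMultilinearSeries.radius]
  have hq : HasFPowerSeriesAt (fun z => q.sum (z - t₀)) q t₀ := by
    simpa using (q.hasFPowerSeriesOnBall (hradius ▸ hp.radius_pos)).hasFPowerSeriesAt.comp_sub t₀
  refine ⟨_, hq.analyticAt, ?_⟩
  have hsum := Complex.continuous_ofReal.continuousAt.eventually (hasFPowerSeriesAt_iff'.1 hq)
  filter_upwards [hsum, hasFPowerSeriesAt_iff'.1 hp] with t hFt hft
  refine hFt.unique (hft.congr_fun fun n => ?_)
  rw [hcoeff, ← Complex.ofReal_sub, ← Complex.ofReal_pow, Complex.coe_smul]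

section ParametricIntegral

variable {α E : Type*} [MeasurableSpace α] {μ : Measure α} [NormedAddCommGroup E]

theorem aestronglyMeasurable_of_hasDerivAt {𝕜 : Type*} [NontriviallyNormedField 𝕜]
    [NormedSpace 𝕜 E] {F : 𝕜 → α → E} {F' : α → E} {s : Set 𝕜} {z₀ : 𝕜} (hs : s ∈ 𝓝 z₀)
    (hF : ∀ z ∈ s, AEStronglyMeasurable (F z) μ)
    (hderiv : ∀ᵐ a ∂μ, HasDerivAt (F · a) (F' a) z₀) :
    AEStronglyMeasurable F' μ := by
  have : NeBot (comap ((↑) : s → 𝕜) (𝓝[≠] z₀)) :=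
    comap_coe_neBot_of_le_principal (le_principal_iff.2 (mem_nhdsWithin_of_mem_nhds hs))
  refine aestronglyMeasurable_of_tendsto_ae (comap ((↑) : s → 𝕜) (𝓝[≠] z₀))
    (f := fun z a => slope (F · a) z₀ z) (fun z => ?_) ?_
  · exact ((hF z z.2).sub (hF z₀ (mem_of_mem_nhds hs))).const_smul _
  · filter_upwards [hderiv] with a ha
    exact (hasDerivAt_iff_tendsto_slope.1 ha).comp tendsto_comap

variable [NormedSpace ℂ E] {F : ℂ → α → E} {bound : α → ℝ} {U : Set ℂ}

theorem differentiableOn_integral_of_dominated (hU : IsOpen U)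
    (hmeas : ∀ z ∈ U, AEStronglyMeasurable (F z) μ)
    (hdiff : ∀ᵐ a ∂μ, DifferentiableOn ℂ (F · a) U)
    (hbound : ∀ᵐ a ∂μ, ∀ z ∈ U, ‖F z a‖ ≤ bound a) (hint : Integrable bound μ) :
    DifferentiableOn ℂ (fun z => ∫ a, F z a ∂μ) U := by
  intro z₀ hz₀
  obtain ⟨ε, hε, hεU⟩ := Metric.isOpen_iff.1 hU z₀ hz₀
  have hclosedBall : ∀ z ∈ Metric.ball z₀ (ε / 2), Metric.closedBall z (ε / 2) ⊆ U :=
    fun z hz => (Metric.closedBall_subset_ball' (by linarith [Metric.mem_ball.1 hz])).trans hεU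
  have hderiv : ∀ᵐ a ∂μ, ∀ z ∈ Metric.ball z₀ (ε / 2),
      HasDerivAt (F · a) (deriv (F · a) z) z := by
    filter_upwards [hdiff] with a ha z hz
    have hzU : z ∈ U := hclosedBall z hz (Metric.mem_closedBall_self (by positivity))
    exact (ha.differentiableAt (hU.mem_nhds hzU)).hasDerivAt
  have hcauchy : ∀ᵐ a ∂μ, ∀ z ∈ Metric.ball z₀ (ε / 2),
      ‖deriv (F · a) z‖ ≤ bound a / (ε / 2) := by
    filter_upwards [hdiff, hbound] with a ha hab z hz
    exact Complex.norm_deriv_le_of_forall_mem_sphere_norm_le (half_pos hε)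
      (ha.diffContOnCl_ball (hclosedBall z hz))
      fun w hw => hab w (hclosedBall z hz (Metric.sphere_subset_closedBall hw))
  have hint₀ : Integrable (F z₀) μ :=
    hint.mono' (hmeas z₀ hz₀) (hbound.mono fun a ha => ha z₀ hz₀)
  have hmeas' : AEStronglyMeasurable (fun a => deriv (F · a) z₀) μ :=
    aestronglyMeasurable_of_hasDerivAt (hU.mem_nhds hz₀) hmeas
      (hderiv.mono fun a ha => ha z₀ (Metric.mem_ball_self (half_pos hε)))
  have hintegral := (hasDerivAt_integral_of_dominated_loc_of_deriv_le
    (Metric.ball_mem_nhds z₀ (half_pos hε)) (eventually_of_mem (hU.mem_nhds hz₀) hmeas) hint₀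
    hmeas' hcauchy (hint.div_const _) hderiv).2
  exact hintegral.differentiableAt.differentiableWithinAt

end ParametricIntegral

section GaussianDomination

variable {a : ℝ}

theorem norm_cexp_neg_mul_sq_add_mul_le {c K : ℝ} {u v : ℂ} (hac : a < c) (hu : c ≤ u.re)
    (hv : ‖v‖ ≤ K) (x : ℝ) :
    ‖Complex.exp (-u * x ^ 2 + v * x)‖ ≤
      Real.exp (K ^ 2 / (4 * (c - a))) * Real.exp (-a * x ^ 2) := by
  have : 0 < c - a := sub_pos.2 hac
  have hre : (-u * x ^ 2 + v * x).re = -u.re * x ^ 2 + v.re * x := by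
    simp [← Complex.ofReal_pow]
  have hvre : v.re ^ 2 ≤ K ^ 2 :=
    sq_le_sq' (by linarith [Complex.abs_re_le_norm v, neg_abs_le v.re])
      ((Complex.re_le_norm v).trans hv)
  have hamgm : v.re * x ≤ K ^ 2 / (4 * (c - a)) + (c - a) * x ^ 2 := by
    rw [div_add' _ _ _ (by positivity), le_div_iff₀ (by positivity)]
    linarith [sq_nonneg (v.re - 2 * (c - a) * x)]
  rw [Complex.norm_exp, hre, ← Real.exp_add, Real.exp_le_exp]
  linarith [mul_le_mul_of_nonneg_right hu (sq_nonneg x)]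

theorem analyticAt_integral_cexp_neg_mul_sq_add_mul {μ : Measure ℝ}
    (hint : Integrable (fun x : ℝ => Real.exp (-a * x ^ 2)) μ) {u v : ℂ → ℂ} {z₀ : ℂ}
    (hu : AnalyticAt ℂ u z₀) (hv : AnalyticAt ℂ v z₀) (ha : a < (u z₀).re) :
    AnalyticAt ℂ (fun z => ∫ x : ℝ, Complex.exp (-u z * x ^ 2 + v z * x) ∂μ) z₀ := by
  obtain ⟨c, hac, hcu⟩ := exists_between ha
  obtain ⟨K, hK⟩ := exists_gt ‖v z₀‖
  have hnear : ∀ᶠ z in 𝓝 z₀, c < (u z).re ∧ ‖v z‖ < K ∧ AnalyticAt ℂ u z ∧ AnalyticAt ℂ v z :=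
    ((Complex.continuous_re.continuousAt.comp hu.continuousAt).eventually_const_lt hcu).and
      ((hv.continuousAt.norm.eventually_lt_const hK).and
        (hu.eventually_analyticAt.and hv.eventually_analyticAt))
  obtain ⟨U, hUsub, hUopen, hz₀⟩ := mem_nhds_iff.1 hnear
  refine DifferentiableOn.analyticAt (differentiableOn_integral_of_dominated hUopen
    (fun z _ => ?_) (ae_of_all μ fun x z hz => ?_) (ae_of_all μ fun x z hz => ?_)
    (hint.const_mul (Real.exp (K ^ 2 / (4 * (c - a)))))) (hUopen.mem_nhds hz₀)
  · exact Continuous.aestronglyMeasurable (by fun_prop)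
  · obtain ⟨-, -, huz, hvz⟩ := hUsub hz
    have := huz.differentiableAt
    have := hvz.differentiableAt
    exact DifferentiableAt.differentiableWithinAt (by fun_prop)
  · obtain ⟨hcz, hKz, -, -⟩ := hUsub hz
    exact norm_cexp_neg_mul_sq_add_mul_le hac hcz.le hKz.le x

end GaussianDomination

theorem toReal_rMu (μ : Measure ℝ) (t x : ℝ) : (rMu μ t x).toReal = ∫ θ, rTheta θ t x ∂μ := by
  have hmeas : AEStronglyMeasurable (fun θ => rTheta θ t x) μ :=
    Continuous.aestronglyMeasurable (by unfold rTheta; fun_prop)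
  exact (integral_eq_lintegral_of_nonneg_ae (ae_of_all μ fun θ => (Real.exp_pos _).le) hmeas).symm

theorem ofReal_rTheta (θ t x : ℝ) :
    (rTheta θ t x : ℂ) = Complex.exp (-(1 / (2 * t)) * θ ^ 2 + x / t * θ) := by
  rw [rTheta]
  push_cast
  ring_nf

theorem analyticAt_toReal_rMu {b : ℝ → ℝ} {μ : Measure ℝ} {t₀ t₁ : ℝ} (hb : AnalyticAt ℝ b t₀)
    (ht₀ : t₀ ∈ Ioo 0 t₁)
    (hint : ∫⁻ θ, ENNReal.ofReal (Real.exp (-θ ^ 2 / (2 * t₁))) ∂μ < ⊤) :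
    AnalyticAt ℝ (fun t => (rMu μ t (b t)).toReal) t₀ := by
  obtain ⟨B, hB, hBb⟩ :=
    exists_analyticAt_complex_eventually_eq ((Complex.ofRealCLM.analyticAt _).comp hb)
  have ht₀_ne : (t₀ : ℂ) ≠ 0 := Complex.ofReal_ne_zero.2 ht₀.1.ne'
  have hgauss : Integrable (fun θ : ℝ => Real.exp (-(1 / (2 * t₁)) * θ ^ 2)) μ := by
    refine ⟨Continuous.aestronglyMeasurable (by fun_prop), ?_⟩
    rw [hasFiniteIntegral_iff_ofReal (ae_of_all μ fun _ => (Real.exp_pos _).le)]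
    convert hint using 5
    ring
  have hre : 1 / (2 * t₁) < (1 / (2 * (t₀ : ℂ))).re := by
    have hcast : 1 / (2 * (t₀ : ℂ)) = ((1 / (2 * t₀) : ℝ) : ℂ) := by push_cast; rfl
    rw [hcast, Complex.ofReal_re]
    exact one_div_lt_one_div_of_lt (by linarith [ht₀.1]) (by linarith [ht₀.2])
  have hanalytic : AnalyticAt ℂ
      (fun z => ∫ θ : ℝ, Complex.exp (-(1 / (2 * z)) * θ ^ 2 + B z / z * θ) ∂μ) t₀ :=
    analyticAt_integral_cexp_neg_mul_sq_add_mul hgauss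
      (analyticAt_const.div (analyticAt_const.mul analyticAt_id) (mul_ne_zero two_ne_zero ht₀_ne))
      (hB.div analyticAt_id ht₀_ne) hre
  refine hanalytic.re_ofReal.congr ?_
  filter_upwards [hBb] with t hBt
  simp only [hBt, Function.comp_apply, Complex.ofRealCLM_apply, ← ofReal_rTheta,
    integral_complex_ofReal, Complex.ofReal_re, toReal_rMu]

theorem stmt_3_general {b : ℝ → ℝ} {μ : Measure ℝ} {tstar ttilde : ℝ}
    (hb : AnalyticOnNhd ℝ b (Ioo 0 tstar))
    (hint : ∫⁻ θ, ENNReal.ofReal (Real.exp (-θ ^ 2 / (2 * tstar))) ∂μ < ⊤)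
    (httilde : ttilde ∈ Ioo 0 tstar) (hacc : AccPt ttilde (𝓟 {t | rMu μ t (b t) = 1})) :
    ∀ t ∈ Ioo 0 tstar, rMu μ t (b t) = 1 := by
  have hanalytic : AnalyticOnNhd ℝ (fun t => (rMu μ t (b t)).toReal) (Ioo 0 tstar) :=
    fun t ht => analyticAt_toReal_rMu (hb t ht) ht hint
  have hone : ∃ᶠ t in 𝓝[≠] ttilde, (rMu μ t (b t)).toReal = 1 :=
    (accPt_iff_frequently_nhdsNE.1 hacc).mono fun t ht => (ENNReal.toReal_eq_one_iff _).2 ht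
  have heq := hanalytic.eqOn_of_preconnected_of_frequently_eq analyticOnNhd_const
    isPreconnected_Ioo httilde hone
  exact fun t ht => (ENNReal.toReal_eq_one_iff _).1 (heq ht)

theorem stmt_3 (b : ℝ → ℝ) (hba : AnalyticOnNhd ℝ b (Set.Ici 0)) (hb0 : 0 < b 0)
    (μ : Measure ℝ) [SigmaFinite μ]
    (hsupp : μ (Set.Ioi (0 : ℝ))ᶜ = 0)
    (hgap : μ (Set.Ioo 0 (2 * b 0)) = 0)
    (tstar : ℝ) (htstar : 0 < tstar)
    (hint : (∫⁻ θ, ENNReal.ofReal (Real.exp (-θ ^ 2 / (2 * tstar))) ∂μ) < ⊤)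
    (ts : ℕ → ℝ) (hts : ∀ n, ts n ∈ Set.Ioi (0 : ℝ)) (hinj : Function.Injective ts)
    (ttilde : ℝ) (httilde : ttilde ∈ Set.Ioo 0 tstar)
    (hacc : MapClusterPt ttilde atTop ts)
    (hone : ∀ n, rMu μ (ts n) (b (ts n)) = 1) :
    ∀ t ∈ Set.Ioo 0 tstar, rMu μ t (b t) = 1 := by
  have hrange : AccPt ttilde (𝓟 (range ts)) :=
    accPt_principal_range_of_mapClusterPt_cofinite hinj (Nat.cofinite_eq_atTop ▸ hacc)
  exact stmt_3_general (hba.mono fun t ht => ht.1.le) hint httilde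
    (hrange.mono (principal_mono.2 (range_subset_iff.2 hone)))
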